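/- Let A_1,…,A_T be unital *-subalgebras of the algebra M_D(ℂ) of D×D complex matrices such that: (i) they pairwise commute elementwise (XY = YX for all X ∈ A_j, Y ∈ A_k with j ≠ k); and (ii) they are complete (the subalgebra of M_D(ℂ) generated by ⋃_j A_j is all of M_D(ℂ)). Then each A_j has trivial center (the only elements of A_j that commute with every element of A_j are the scalar multiples of the identity), and there exist positive integers d_1,…,d_T with d_1 d_2 ⋯ d_T = D and a unitary U ∈ M_D(ℂ) such that, for each j, U A_j U† = { I_{d_1} ⊗ ⋯ ⊗ I_{d_{j−1}} ⊗ X ⊗ I_{d_{j+1}} ⊗ ⋯ ⊗ I_{d_T} : X ∈ M_{d_j}(ℂ) } (Kronecker products with arbitrary j-th factor and identity elsewhere). -/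

import Mathlib

open scoped BigOperators Matrix

namespace BV

open Classical in
/-- The matrix `X` on the `j`-th tensor factor, amplified by the identity on the others
(Kronecker product with arbitrary `j`-th factor and identities elsewhere). -/
noncomputable def factorMat {T : ℕ} (dv : Fin T → ℕ) (j : Fin T)
    (X : Matrix (Fin (dv j)) (Fin (dv j)) ℂ) :
    Matrix (∀ l, Fin (dv l)) (∀ l, Fin (dv l)) ℂ :=
  fun a b => if (∀ l, l ≠ j → a l = b l) then X (a j) (b j) else 0

/-!
Each `A j` together with its commutant generates the full matrix algebra, so a minimal
`A j`-invariant subspace of `ℂ^D` is a faithful irreducible `A j`-module. By Burnside's theorem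
`A j` acts on it as the algebra of all endomorphisms, which makes `A j` star-isomorphic to a full
matrix algebra. The resulting commuting embeddings of matrix algebras combine into a star-morphism
from the matrices over the product index set to `M_D(ℂ)`; it is injective because its source is
simple and surjective because the family is complete. Finally, every star-isomorphism between full
matrix algebras is conjugation by a unitary, up to a relabelling of the basis.
-/

section Centralizer

variable {R B : Type*} [CommSemiring R] [Semiring B] [Algebra R B]

theorem sup_centralizer_eq_top_of_adjoin_iUnion_eq_top {ι : Type*} {A : ι → Subalgebra R B}
    (hcomm : Pairwise fun j k => ∀ x ∈ A j, ∀ y ∈ A k, Commute x y)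
    (hcomplete : Algebra.adjoin R (⋃ j, (A j : Set B)) = ⊤) (j : ι) :
    A j ⊔ Subalgebra.centralizer R (A j : Set B) = ⊤ := by
  rw [eq_top_iff, ← hcomplete, Algebra.adjoin_le_iff, Set.iUnion_subset_iff]
  intro k y hy
  rcases eq_or_ne j k with rfl | hjk
  · exact Algebra.mem_sup_left hy
  · exact Algebra.mem_sup_right fun x hx => hcomm hjk x hx y hy

theorem map_sup_centralizer_eq_top {C : Type*} [Semiring C] [Algebra R C] {f : B →ₐ[R] C}
    (hf : Function.Surjective f) {A : Subalgebra R B}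
    (hA : A ⊔ Subalgebra.centralizer R (A : Set B) = ⊤) :
    A.map f ⊔ Subalgebra.centralizer R (A.map f : Set C) = ⊤ := by
  have hcentralizer : (Subalgebra.centralizer R (A : Set B)).map f ≤
      Subalgebra.centralizer R (A.map f : Set C) := by
    rintro _ ⟨y, hy, rfl⟩ _ ⟨x, hx, rfl⟩
    exact (map_mul f x y).symm.trans ((congrArg f (hy x hx)).trans (map_mul f y x))
  rw [eq_top_iff, ← (AlgHom.range_eq_top f).2 hf, ← Algebra.map_top, ← hA, Algebra.map_sup]
  exact sup_le_sup_left hcentralizer _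

theorem mem_center_of_sup_centralizer_eq_top {A : Subalgebra R B}
    (hA : A ⊔ Subalgebra.centralizer R (A : Set B) = ⊤) {x : B} (hxA : x ∈ A)
    (hx : ∀ y ∈ A, Commute x y) : x ∈ Subalgebra.center R B := by
  have hle : A ⊔ Subalgebra.centralizer R (A : Set B) ≤ Subalgebra.centralizer R {x} :=
    sup_le (fun y hy => by simpa [Subalgebra.mem_centralizer_iff] using (hx y hy).eq)
      (fun y hy => by simpa [Subalgebra.mem_centralizer_iff] using hy x hxA)
  rw [hA] at hle
  exact Subalgebra.mem_center_iff.2 fun y => (hle (Algebra.mem_top : y ∈ ⊤) x rfl).symm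

theorem smul_mem_of_sup_centralizer_eq_top
    {E : Type*} [AddCommMonoid E] [Module B E] {A : Subalgebra R B}
    (hA : A ⊔ Subalgebra.centralizer R (A : Set B) = ⊤) {N : Submodule A E}
    (hN : ∀ c ∈ Subalgebra.centralizer R (A : Set B), ∀ v ∈ N, c • v ∈ N) (b : B) {v : E}
    (hv : v ∈ N) : b • v ∈ N := by
  have hb : b ∈ A ⊔ Subalgebra.centralizer R (A : Set B) := hA ▸ Algebra.mem_top
  rw [Algebra.sup_def] at hb
  induction hb using Algebra.adjoin_induction generalizing v with
  | mem b hb => exact hb.elim (fun hbA => N.smul_mem ⟨b, hbA⟩ hv) (fun hbA' => hN b hbA' v hv)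
  | algebraMap r => exact N.smul_mem (algebraMap R A r) hv
  | add b c _ _ hb hc => exact add_smul b c v ▸ N.add_mem (hb hv) (hc hv)
  | mul b c _ _ hb hc => exact mul_smul b c v ▸ hb (hc hv)

end Centralizer

theorem faithfulSMul_submodule_of_sup_centralizer_eq_top {R B E : Type*} [CommRing R] [Ring B]
    [Algebra R B] [AddCommGroup E] [Module B E] [IsSimpleModule B E] [FaithfulSMul B E]
    {A : Subalgebra R B} (hA : A ⊔ Subalgebra.centralizer R (A : Set B) = ⊤)
    {W : Submodule A E} (hW : W ≠ ⊥) : FaithfulSMul A W := by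
  -- The vectors killed by the annihilator of `W` form a `B`-submodule, hence all of `E`.
  let N : Submodule A E :=
    { carrier := {v | ∀ x ∈ Module.annihilator A W, x • v = 0}
      zero_mem' := fun x _ => smul_zero x
      add_mem' := fun hv hw x hx => by rw [smul_add, hv x hx, hw x hx, add_zero]
      smul_mem' := fun a v hv x hx => by
        rw [← mul_smul]
        exact hv _ (Ideal.mul_mem_right a _ hx) }
  have hN : ∀ c ∈ Subalgebra.centralizer R (A : Set B), ∀ v ∈ N, c • v ∈ N := by
    intro c hc v hv x hx
    calc (x : B) • c • v = c • (x : B) • v := by rw [← mul_smul, hc x x.2, mul_smul]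
      _ = 0 := by rw [← Subalgebra.smul_def, hv x hx, smul_zero]
  let N' : Submodule B E :=
    { N with smul_mem' := fun b _ => smul_mem_of_sup_centralizer_eq_top hA hN b }
  have hWN : ∀ w ∈ W, w ∈ N' := fun w hw x hx =>
    congrArg Subtype.val (Module.mem_annihilator.1 hx ⟨w, hw⟩)
  have hN' : N' = ⊤ := (eq_bot_or_eq_top N').resolve_left fun hbot =>
    hW ((Submodule.eq_bot_iff W).2 fun w hw => (Submodule.eq_bot_iff N').1 hbot w (hWN w hw))
  refine Module.annihilator_eq_bot.1 <|
    (Submodule.eq_bot_iff (Module.annihilator A W)).2 fun x hx => ?_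
  have hx_zero : (x : B) = 0 := FaithfulSMul.eq_of_smul_eq_smul (α := E) fun v =>
    ((hN'.ge Submodule.mem_top : v ∈ N') x hx).trans (zero_smul B v).symm
  exact Subtype.ext hx_zero

theorem lsmul_surjective_of_isSimpleModule (K R W : Type*) [Field K] [IsAlgClosed K] [Ring R]
    [Algebra K R] [AddCommGroup W] [Module K W] [Module R W] [IsScalarTower K R W]
    [FiniteDimensional K W] [IsSimpleModule R W] :
    Function.Surjective (Algebra.lsmul K K W : R →ₐ[K] Module.End K W) := by
  have : Module.Finite (Module.End R W) W := .of_restrictScalars_finite K _ _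
  intro f
  have hschur := (IsSimpleModule.algebraMap_end_bijective_of_isAlgClosed (A := R) (V := W) K).2
  let g : Module.End (Module.End R W) W :=
    { f with
      map_smul' := fun m w => by
        obtain ⟨c, rfl⟩ := hschur m
        simp }
  obtain ⟨r, hr⟩ := Module.Finite.toModuleEnd_moduleEnd_surjective (R := R) (M := W) g
  exact ⟨r, LinearMap.ext fun w => congrArg (fun h => h w) hr⟩

/-- The action of a star-subalgebra on an invariant subspace, which is compatible with
adjoints for the restricted inner product. -/
noncomputable def restrictStarAlgHom {𝕜 E : Type*} [RCLike 𝕜] [NormedAddCommGroup E]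
    [InnerProductSpace 𝕜 E] [FiniteDimensional 𝕜 E] (A : StarSubalgebra 𝕜 (E →ₗ[𝕜] E))
    (W : Submodule A.toSubalgebra E) :
    A →⋆ₐ[𝕜] (W.restrictScalars 𝕜 →ₗ[𝕜] W.restrictScalars 𝕜) :=
  { Algebra.lsmul 𝕜 𝕜 (W.restrictScalars 𝕜) with
    map_star' := fun x => (LinearMap.eq_adjoint_iff _ _).2 fun v w =>
      LinearMap.adjoint_inner_left (x : E →ₗ[𝕜] E) (w : E) (v : E) }

theorem exists_starAlgHom_range_eq_of_sup_centralizer_eq_top {E : Type*} [NormedAddCommGroup E]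
    [InnerProductSpace ℂ E] [FiniteDimensional ℂ E] [Nontrivial E]
    {A : StarSubalgebra ℂ (E →ₗ[ℂ] E)}
    (hA : A.toSubalgebra ⊔ Subalgebra.centralizer ℂ (A : Set (E →ₗ[ℂ] E)) = ⊤) :
    ∃ d : ℕ, 0 < d ∧ ∃ ψ : Matrix (Fin d) (Fin d) ℂ →⋆ₐ[ℂ] (E →ₗ[ℂ] E), ψ.range = A := by
  have : IsArtinian A.toSubalgebra E := isArtinian_of_tower ℂ inferInstance
  obtain ⟨W, hW⟩ := IsAtomic.exists_atom (Submodule A.toSubalgebra E)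
  let V := W.restrictScalars ℂ
  have : IsSimpleModule A.toSubalgebra W := isSimpleModule_iff_isAtom.2 hW
  have : IsSimpleModule A.toSubalgebra V :=
    IsSimpleModule.congr (N := W) (Submodule.restrictScalarsEquiv ℂ A.toSubalgebra E W)
  have : Nontrivial V := IsSimpleModule.nontrivial A.toSubalgebra V
  have : FaithfulSMul A.toSubalgebra V := faithfulSMul_submodule_of_sup_centralizer_eq_top hA hW.1
  have hφ : Function.Bijective (restrictStarAlgHom A W) :=
    ⟨fun x y hxy => FaithfulSMul.eq_of_smul_eq_smul (α := V) fun v => LinearMap.congr_fun hxy v,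
      lsmul_surjective_of_isSimpleModule ℂ A.toSubalgebra V⟩
  let φ := (StarAlgEquiv.ofBijective _ hφ).trans
    (LinearMap.toMatrixOrthonormal (stdOrthonormalBasis ℂ V))
  refine ⟨_, Module.finrank_pos (R := ℂ) (M := V), A.subtype.comp (φ.symm : _ →⋆ₐ[ℂ] A), ?_⟩
  ext x
  constructor
  · rintro ⟨y, rfl⟩
    exact (φ.symm y).2
  · exact fun hx => ⟨φ ⟨x, hx⟩, congrArg Subtype.val (φ.symm_apply_apply ⟨x, hx⟩)⟩

theorem exists_starAlgHom_matrix_range_eq_of_sup_centralizer_eq_top {n : Type*} [Fintype n]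
    [DecidableEq n] [Nonempty n] {A : StarSubalgebra ℂ (Matrix n n ℂ)}
    (hA : A.toSubalgebra ⊔ Subalgebra.centralizer ℂ (A : Set (Matrix n n ℂ)) = ⊤) :
    ∃ d : ℕ, 0 < d ∧ ∃ ψ : Matrix (Fin d) (Fin d) ℂ →⋆ₐ[ℂ] Matrix n n ℂ, ψ.range = A := by
  let e := LinearMap.toMatrixOrthonormal (EuclideanSpace.basisFun n ℂ)
  let f : Matrix n n ℂ →⋆ₐ[ℂ] (EuclideanSpace ℂ n →ₗ[ℂ] EuclideanSpace ℂ n) :=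
    (e.symm : _ →⋆ₐ[ℂ] _)
  obtain ⟨d, hd, ψ, hψ⟩ := exists_starAlgHom_range_eq_of_sup_centralizer_eq_top (A := A.map f)
    (map_sup_centralizer_eq_top (f := f.toAlgHom) e.symm.surjective hA)
  refine ⟨d, hd, (e : _ →⋆ₐ[ℂ] Matrix n n ℂ).comp ψ, ?_⟩
  ext X
  constructor
  · rintro ⟨Y, rfl⟩
    obtain ⟨Z, hZ, hZY⟩ : ψ Y ∈ A.map f := hψ ▸ ⟨Y, rfl⟩
    exact ((congrArg e hZY).symm.trans (e.apply_symm_apply Z)) ▸ hZ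
  · intro hX
    obtain ⟨Y, hY⟩ : f X ∈ ψ.range := hψ ▸ ⟨X, hX, rfl⟩
    exact ⟨Y, (congrArg e hY).trans (e.apply_symm_apply X)⟩

section PiKronecker

variable {ι R : Type*} {κ : ι → Type*} [Fintype ι] [CommSemiring R]

/-- The Kronecker product `⨂ l, M l` of a finite family of square matrices, with rows and columns
indexed by the functions choosing an index of each factor. -/
def piKronecker (M : ∀ l, Matrix (κ l) (κ l) R) : Matrix (∀ l, κ l) (∀ l, κ l) R :=
  Matrix.of fun a b => ∏ l, M l (a l) (b l)

theorem piKronecker_apply (M : ∀ l, Matrix (κ l) (κ l) R) (a b : ∀ l, κ l) :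
    piKronecker M a b = ∏ l, M l (a l) (b l) :=
  rfl

theorem piKronecker_mul [DecidableEq ι] [∀ l, Fintype (κ l)] (M N : ∀ l, Matrix (κ l) (κ l) R) :
    piKronecker (M * N) = piKronecker M * piKronecker N := by
  ext a b
  simp only [piKronecker_apply, Pi.mul_apply, Matrix.mul_apply, Finset.prod_univ_sum,
    Fintype.piFinset_univ, Finset.prod_mul_distrib]

theorem piKronecker_star [StarRing R] (M : ∀ l, Matrix (κ l) (κ l) R) :
    piKronecker (star M) = star (piKronecker M) := by
  ext a b
  simp only [piKronecker_apply, Pi.star_apply, Matrix.star_apply, star_prod]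

theorem piKronecker_one [∀ l, DecidableEq (κ l)] :
    piKronecker (1 : ∀ l, Matrix (κ l) (κ l) R) = 1 := by
  ext a b
  simp only [piKronecker_apply, Pi.one_apply, Matrix.one_apply, Fintype.prod_ite_zero, funext_iff,
    Finset.prod_const_one]

theorem piKronecker_single [∀ l, DecidableEq (κ l)] (a b : ∀ l, κ l) :
    piKronecker (fun l => Matrix.single (a l) (b l) (1 : R)) = Matrix.single a b 1 := by
  ext a' b'
  simp only [piKronecker_apply, Matrix.single_apply, Fintype.prod_ite_zero, funext_iff,
    forall_and, Finset.prod_const_one]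

theorem mem_span_range_piKronecker [∀ l, Finite (κ l)] (X : Matrix (∀ l, κ l) (∀ l, κ l) R) :
    X ∈ Submodule.span R (Set.range (piKronecker (R := R) (κ := κ))) := by
  classical
  have := fun l => Fintype.ofFinite (κ l)
  rw [Matrix.matrix_eq_sum_single X]
  refine Submodule.sum_mem _ fun a _ => Submodule.sum_mem _ fun b _ => ?_
  rw [← mul_one (X a b), ← smul_eq_mul, ← Matrix.smul_single, ← piKronecker_single]
  exact Submodule.smul_mem _ _ (Submodule.subset_span (Set.mem_range_self _))

theorem piKronecker_mulSingle_apply [DecidableEq ι] [∀ l, DecidableEq (κ l)] (j : ι)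
    (X : Matrix (κ j) (κ j) R) (a b : ∀ l, κ l) :
    piKronecker (Pi.mulSingle j X) a b =
      if ∀ l, l ≠ j → a l = b l then X (a j) (b j) else 0 := by
  have hoff : ∀ l : {l // l ≠ j}, (Pi.mulSingle j X : ∀ l, Matrix (κ l) (κ l) R) l (a l) (b l) =
      if a l = b l then 1 else 0 := fun l => by
    rw [Pi.mulSingle_eq_of_ne l.2, Matrix.one_apply]
  rw [piKronecker_apply, Fintype.prod_eq_mul_prod_subtype_ne _ j, Fintype.prod_congr _ _ hoff,
    Fintype.prod_ite_zero, Pi.mulSingle_eq_same, Finset.prod_const_one, mul_ite, mul_one, mul_zero]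
  simp only [Subtype.forall]

end PiKronecker

section Lift

variable {ι R B : Type*} {κ : ι → Type*} [Fintype ι] [DecidableEq ι] [∀ l, Fintype (κ l)]
  [∀ l, DecidableEq (κ l)] [CommSemiring R]

/-- The linear map on matrices over a product index set induced by a multilinear map on the
factors, extending it along `piKronecker`. -/
noncomputable def liftPiKronecker [AddCommMonoid B] [Module R B]
    (Φ : MultilinearMap R (fun l => Matrix (κ l) (κ l) R) B) :
    Matrix (∀ l, κ l) (∀ l, κ l) R →ₗ[R] B :=
  Matrix.liftLinear R fun a b =>
    LinearMap.toSpanSingleton R B (Φ fun l => Matrix.single (a l) (b l) 1)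

theorem liftPiKronecker_piKronecker [AddCommMonoid B] [Module R B]
    (Φ : MultilinearMap R (fun l => Matrix (κ l) (κ l) R) B) (M : ∀ l, Matrix (κ l) (κ l) R) :
    liftPiKronecker Φ (piKronecker M) = Φ M := by
  have hM : M = fun l => ∑ i, ∑ j, M l i j • Matrix.single i j (1 : R) := by
    ext1 l
    simpa only [Matrix.smul_single, smul_eq_mul, mul_one] using Matrix.matrix_eq_sum_single (M l)
  conv_rhs => rw [hM, Φ.map_sum]
  simp only [liftPiKronecker, Matrix.liftLinear_apply, LinearMap.toSpanSingleton_apply,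
    piKronecker_apply, Φ.map_sum, Φ.map_smul_univ]

variable [StarRing R] [Semiring B] [StarRing B] [Algebra R B] [StarModule R B]

theorem exists_starAlgHom_piKronecker (Φ : MultilinearMap R (fun l => Matrix (κ l) (κ l) R) B)
    (hone : Φ 1 = 1) (hmul : ∀ M N, Φ (M * N) = Φ M * Φ N) (hstar : ∀ M, Φ (star M) = star (Φ M)) :
    ∃ f : Matrix (∀ l, κ l) (∀ l, κ l) R →⋆ₐ[R] B, ∀ M, f (piKronecker M) = Φ M := by
  have hmap_mul : ∀ X Y, liftPiKronecker Φ (X * Y) = liftPiKronecker Φ X * liftPiKronecker Φ Y := by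
    intro X Y
    induction mem_span_range_piKronecker X, mem_span_range_piKronecker Y
      using Submodule.span_induction₂ with
    | mem_mem _ _ hX hY =>
      obtain ⟨⟨M, rfl⟩, ⟨N, rfl⟩⟩ := And.intro hX hY
      simp only [← piKronecker_mul, liftPiKronecker_piKronecker, hmul]
    | zero_left => simp only [zero_mul, map_zero]
    | zero_right => simp only [mul_zero, map_zero]
    | add_left _ _ _ _ _ _ h₁ h₂ => simp only [add_mul, map_add, h₁, h₂]
    | add_right _ _ _ _ _ _ h₁ h₂ => simp only [mul_add, map_add, h₁, h₂]
    | smul_left _ _ _ _ _ h => simp only [smul_mul_assoc, map_smul, h]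
    | smul_right _ _ _ _ _ h => simp only [mul_smul_comm, map_smul, h]
  have hmap_star : ∀ X, liftPiKronecker Φ (star X) = star (liftPiKronecker Φ X) := by
    intro X
    induction mem_span_range_piKronecker X using Submodule.span_induction with
    | mem _ hX =>
      obtain ⟨M, rfl⟩ := hX
      simp only [← piKronecker_star, liftPiKronecker_piKronecker, hstar]
    | zero => simp only [star_zero, map_zero]
    | add _ _ _ _ h₁ h₂ => simp only [star_add, map_add, h₁, h₂]
    | smul _ _ _ h => simp only [star_smul, map_smul, h]
  have hmap_one : liftPiKronecker Φ 1 = 1 := by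
    rw [← piKronecker_one, liftPiKronecker_piKronecker, hone]
  exact ⟨{ AlgHom.ofLinearMap _ hmap_one hmap_mul with map_star' := hmap_star },
    liftPiKronecker_piKronecker Φ⟩

end Lift

section NoncommPiCoprod

variable {ι B : Type*} {M : ι → Type*} [Fintype ι]

theorem noncommPiCoprod_update [DecidableEq ι] [∀ j, Monoid (M j)] [Monoid B] (φ : ∀ j, M j →* B)
    (hφ : Pairwise fun i j => ∀ x y, Commute (φ i x) (φ j y)) (x : ∀ j, M j) (j : ι) (y : M j) :
    MonoidHom.noncommPiCoprod φ hφ (Function.update x j y) =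
      MonoidHom.noncommPiCoprod φ hφ (Function.update x j 1) * φ j y := by
  rw [← MonoidHom.noncommPiCoprod_mulSingle φ (hcomm := hφ) j y, ← map_mul, Pi.mulSingle,
    ← Function.update_mul, one_mul, mul_one]

theorem noncommPiCoprod_star [∀ j, Monoid (M j)] [∀ j, StarMul (M j)] [Monoid B] [StarMul B]
    {φ : ∀ j, M j →* B} (hφ : Pairwise fun i j => ∀ x y, Commute (φ i x) (φ j y))
    (hstar : ∀ j x, φ j (star x) = star (φ j x)) (x : ∀ j, M j) :
    MonoidHom.noncommPiCoprod φ hφ (star x) = star (MonoidHom.noncommPiCoprod φ hφ x) := by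
  classical
  let Φ : (∀ j, M j) →* B :=
    { toFun := fun x => star (MonoidHom.noncommPiCoprod φ hφ (star x))
      map_one' := by rw [star_one, map_one, star_one]
      map_mul' := fun x y => by rw [star_mul, map_mul, star_mul] }
  have hΦ : Φ = MonoidHom.noncommPiCoprod φ hφ := MonoidHom.pi_ext fun j y => by
    change star (MonoidHom.noncommPiCoprod φ hφ (star (Pi.mulSingle j y))) = _
    rw [Pi.star_mulSingle, MonoidHom.noncommPiCoprod_mulSingle,
      MonoidHom.noncommPiCoprod_mulSingle, hstar, star_star]
  have hx : star (MonoidHom.noncommPiCoprod φ hφ (star (star x))) =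
      MonoidHom.noncommPiCoprod φ hφ (star x) := DFunLike.congr_fun hΦ (star x)
  rw [← hx, star_star]

/-- The multilinear map sending `x` to the product of the pairwise commuting elements
`ψ j (x j)`. -/
noncomputable def noncommProdMultilinearMap {R : Type*} [DecidableEq ι] [CommSemiring R]
    [∀ j, Semiring (M j)] [∀ j, Algebra R (M j)] [Semiring B] [Algebra R B] (ψ : ∀ j, M j →ₐ[R] B)
    (hψ : Pairwise fun i j => ∀ x y, Commute (ψ i x) (ψ j y)) : MultilinearMap R M B :=
  have hupdate := noncommPiCoprod_update (fun j => (ψ j : M j →* B)) hψ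
  .mk' (MonoidHom.noncommPiCoprod (fun j => (ψ j : M j →* B)) hψ)
    (fun x j y z => by
      rw [hupdate x j (y + z), hupdate x j y, hupdate x j z, MonoidHom.coe_coe, map_add, mul_add])
    (fun x j c y => by
      rw [hupdate x j (c • y), hupdate x j y, MonoidHom.coe_coe, map_smul, mul_smul_comm])

end NoncommPiCoprod

theorem exists_starAlgHom_piKronecker_mulSingle {ι R B : Type*} {κ : ι → Type*} [Fintype ι]
    [DecidableEq ι] [∀ l, Fintype (κ l)] [∀ l, DecidableEq (κ l)] [CommSemiring R] [StarRing R]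
    [Semiring B] [StarRing B] [Algebra R B] [StarModule R B]
    (ψ : ∀ j, Matrix (κ j) (κ j) R →⋆ₐ[R] B)
    (hψ : Pairwise fun i j => ∀ X Y, Commute (ψ i X) (ψ j Y)) :
    ∃ f : Matrix (∀ l, κ l) (∀ l, κ l) R →⋆ₐ[R] B,
      ∀ j X, f (piKronecker (Pi.mulSingle j X)) = ψ j X := by
  obtain ⟨f, hf⟩ := exists_starAlgHom_piKronecker
    (noncommProdMultilinearMap (fun j => (ψ j).toAlgHom) hψ)
    (map_one (MonoidHom.noncommPiCoprod _ hψ)) (map_mul (MonoidHom.noncommPiCoprod _ hψ))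
    (noncommPiCoprod_star hψ fun j => map_star (ψ j))
  exact ⟨f, fun j X => (hf _).trans
    (MonoidHom.noncommPiCoprod_mulSingle (fun j => (ψ j : Matrix (κ j) (κ j) R →* B))
      (hcomm := hψ) j X)⟩

theorem exists_unitary_conj {𝕜 n : Type*} [RCLike 𝕜] [Fintype n] [DecidableEq n]
    (f : Matrix n n 𝕜 ≃⋆ₐ[𝕜] Matrix n n 𝕜) :
    ∃ U ∈ Matrix.unitaryGroup n 𝕜, ∀ X, f X = U * X * Uᴴ := by
  let T := Matrix.toEuclideanCLM (n := n) (𝕜 := 𝕜)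
  let g := (T.symm.trans f).trans T
  have hg : Continuous g := g.toAlgEquiv.toLinearMap.continuous_of_finiteDimensional
  obtain ⟨V, hV⟩ := g.eq_linearIsometryEquivConjStarAlgEquiv hg
  let u := Unitary.linearIsometryEquiv.symm V
  refine ⟨T.symm u, Unitary.map_mem T.symm u.2, fun X => T.injective ?_⟩
  calc T (f X) = g (T X) := by simp only [g, StarAlgEquiv.trans_apply, T.symm_apply_apply]
    _ = u * T X * star (u : EuclideanSpace 𝕜 n →L[𝕜] EuclideanSpace 𝕜 n) := by
      rw [hV, ← Unitary.conjStarAlgAut_symm_unitaryLinearIsometryEquiv V]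
      exact Unitary.conjStarAlgAut_apply u (T X)
    _ = T (T.symm u * X * (T.symm u)ᴴ) := by
      simp only [← Matrix.star_eq_conjTranspose, map_mul, map_star, T.apply_symm_apply]

theorem exists_unitary_conj_eq_submatrix {𝕜 m n : Type*} [RCLike 𝕜] [Fintype m]
    [Fintype n] [DecidableEq n] (f : Matrix m m 𝕜 ≃⋆ₐ[𝕜] Matrix n n 𝕜) (e : n ≃ m) :
    ∃ U ∈ Matrix.unitaryGroup n 𝕜, ∀ X, U * f X * Uᴴ = X.submatrix e e := by
  classical
  let r : Matrix m m 𝕜 ≃⋆ₐ[𝕜] Matrix n n 𝕜 :=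
    .ofAlgEquiv (Matrix.reindexAlgEquiv 𝕜 𝕜 e.symm) fun _ => rfl
  obtain ⟨U, hU, hconj⟩ := exists_unitary_conj (f.symm.trans r)
  refine ⟨U, hU, fun X => ?_⟩
  rw [← hconj, StarAlgEquiv.trans_apply, f.symm_apply_apply]
  rfl

theorem card_eq_of_matrix_linearEquiv {R m n : Type*} [Semiring R] [StrongRankCondition R]
    [Fintype m] [Fintype n] (f : Matrix m m R ≃ₗ[R] Matrix n n R) :
    Fintype.card m = Fintype.card n := by
  have h := f.finrank_eq
  rw [Module.finrank_matrix, Module.finrank_matrix, Module.finrank_self, mul_one, mul_one] at h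
  exact Nat.mul_self_inj.1 h

theorem exists_starAlgEquiv_piKronecker_mulSingle {ι n : Type*} [Fintype ι] [DecidableEq ι]
    [Fintype n] [DecidableEq n] [Nonempty n] {A : ι → StarSubalgebra ℂ (Matrix n n ℂ)}
    (hcomm : Pairwise fun j k => ∀ X ∈ A j, ∀ Y ∈ A k, Commute X Y)
    (hcomplete : Algebra.adjoin ℂ (⋃ j, (A j : Set (Matrix n n ℂ))) = ⊤) :
    ∃ (dv : ι → ℕ) (f : Matrix (∀ l, Fin (dv l)) (∀ l, Fin (dv l)) ℂ ≃⋆ₐ[ℂ] Matrix n n ℂ),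
      (∀ j, 0 < dv j) ∧
        ∀ j, (A j : Set (Matrix n n ℂ)) =
          Set.range fun X => f (piKronecker (Pi.mulSingle j X)) := by
  choose dv hpos ψ hψ using fun j => exists_starAlgHom_matrix_range_eq_of_sup_centralizer_eq_top
    (sup_centralizer_eq_top_of_adjoin_iUnion_eq_top (A := fun j => (A j).toSubalgebra)
      hcomm hcomplete j)
  have hψ_mem : ∀ j X, ψ j X ∈ A j := fun j X => hψ j ▸ ⟨X, rfl⟩
  obtain ⟨f, hf⟩ := exists_starAlgHom_piKronecker_mulSingle ψ
    fun j k hjk X Y => hcomm hjk _ (hψ_mem j X) _ (hψ_mem k Y)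
  have hA : ∀ j, (A j : Set (Matrix n n ℂ)) =
      Set.range fun X => f (piKronecker (Pi.mulSingle j X)) := fun j => by
    simp only [hf, ← hψ j]
    rfl
  have hrange : f.toAlgHom.range = ⊤ := by
    rw [eq_top_iff, ← hcomplete, Algebra.adjoin_le_iff, Set.iUnion_subset_iff]
    intro j
    rw [hA j]
    rintro _ ⟨X, rfl⟩
    exact ⟨_, rfl⟩
  have : ∀ j, Nonempty (Fin (dv j)) := fun j => ⟨⟨0, hpos j⟩⟩
  have hinj : Function.Injective f := f.toAlgHom.toRingHom.injective
  exact ⟨dv, .ofBijective f ⟨hinj, (AlgHom.range_eq_top _).1 hrange⟩, hpos, hA⟩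

theorem factorization_of_complete_commuting_algebras_general {ι n : Type*} [Fintype ι]
    [DecidableEq ι] [Fintype n] [DecidableEq n] [Nonempty n]
    (A : ι → StarSubalgebra ℂ (Matrix n n ℂ))
    (hcomm : Pairwise fun j k => ∀ X ∈ A j, ∀ Y ∈ A k, Commute X Y)
    (hcomplete : Algebra.adjoin ℂ (⋃ j, (A j : Set (Matrix n n ℂ))) = ⊤) :
    (∀ j, ∀ X ∈ A j, (∀ Y ∈ A j, Commute X Y) → ∃ c : ℂ, X = c • (1 : Matrix n n ℂ)) ∧
    ∃ dv : ι → ℕ, (∀ j, 0 < dv j) ∧ ∏ j, dv j = Fintype.card n ∧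
      ∃ (e : n ≃ ∀ l, Fin (dv l)) (U : Matrix n n ℂ), U ∈ Matrix.unitaryGroup n ℂ ∧
        ∀ j, (fun X => U * X * Uᴴ) '' (A j : Set (Matrix n n ℂ)) =
          Set.range fun X => (piKronecker (Pi.mulSingle j X)).submatrix e e := by
  have hA : ∀ j, (A j).toSubalgebra ⊔ Subalgebra.centralizer ℂ (A j : Set (Matrix n n ℂ)) = ⊤ :=
    sup_centralizer_eq_top_of_adjoin_iUnion_eq_top (A := fun j => (A j).toSubalgebra)
      hcomm hcomplete
  refine ⟨fun j X hX hXA => ?_, ?_⟩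
  · have hcenter := mem_center_of_sup_centralizer_eq_top (hA j) hX hXA
    rw [Algebra.IsCentral.center_eq_bot, Algebra.mem_bot] at hcenter
    obtain ⟨c, rfl⟩ := hcenter
    exact ⟨c, Algebra.algebraMap_eq_smul_one c⟩
  obtain ⟨dv, f, hpos, hf⟩ := exists_starAlgEquiv_piKronecker_mulSingle hcomm hcomplete
  have hcard := card_eq_of_matrix_linearEquiv f.toAlgEquiv.toLinearEquiv
  let e : n ≃ ∀ l, Fin (dv l) := Fintype.equivOfCardEq hcard.symm
  obtain ⟨U, hU, hconj⟩ := exists_unitary_conj_eq_submatrix f e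
  refine ⟨dv, hpos, ?_, e, U, hU, fun j => ?_⟩
  · simpa only [Fintype.card_pi, Fintype.card_fin] using hcard
  · rw [hf j, ← Set.range_comp]
    exact congrArg Set.range (funext fun X => hconj _)

theorem factorMat_eq_piKronecker {T : ℕ} (dv : Fin T → ℕ) (j : Fin T)
    (X : Matrix (Fin (dv j)) (Fin (dv j)) ℂ) :
    factorMat dv j X = piKronecker (Pi.mulSingle j X) := by
  ext a b
  rw [piKronecker_mulSingle_apply, factorMat]
  congr

/-- Proposition 7, algebraically induced factorization: a complete,
pairwise-commuting family of unital *-subalgebras of `M_D(ℂ)` consists of algebras with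
trivial center, and there is a tensor factorization `ℂ^D ≅ ⊗ⱼ ℂ^{dⱼ}` together with a
unitary conjugation identifying each `Aⱼ` with the full matrix algebra of the `j`-th
tensor factor. -/
theorem factorization_of_complete_commuting_algebras {D T : ℕ} (hD : 0 < D)
    (A : Fin T → StarSubalgebra ℂ (Matrix (Fin D) (Fin D) ℂ))
    (hcomm : ∀ j k, j ≠ k → ∀ X ∈ A j, ∀ Y ∈ A k, X * Y = Y * X)
    (hcomplete : Algebra.adjoin ℂ (⋃ j, (A j : Set (Matrix (Fin D) (Fin D) ℂ))) = ⊤) :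
    (∀ j, ∀ X ∈ A j, (∀ Y ∈ A j, X * Y = Y * X) →
        ∃ c : ℂ, X = c • (1 : Matrix (Fin D) (Fin D) ℂ)) ∧
    ∃ dv : Fin T → ℕ, (∀ j, 0 < dv j) ∧ (∏ j, dv j) = D ∧
      ∃ (e : Fin D ≃ (∀ l, Fin (dv l))) (U : Matrix (Fin D) (Fin D) ℂ),
        U ∈ Matrix.unitaryGroup (Fin D) ℂ ∧
        ∀ j, (fun X => U * X * Uᴴ) '' (A j : Set (Matrix (Fin D) (Fin D) ℂ)) =
          Set.range (fun X : Matrix (Fin (dv j)) (Fin (dv j)) ℂ =>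
            Matrix.submatrix (factorMat dv j X) e e) := by
  have : Nonempty (Fin D) := ⟨⟨0, hD⟩⟩
  simpa only [factorMat_eq_piKronecker, Fintype.card_fin, commute_iff_eq] using
    factorization_of_complete_commuting_algebras_general A hcomm hcomplete

end BV
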